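/- (Effective finite Ramsey bound for pairs via α-largeness.) For every natural number x, if X ⊆ ℕ is a finite ω^{300·x}-large set with min X ≥ 1, then every colouring f : [X]² → 2 has an ω^x-large homogeneous subset H ⊆ X. -/

import Mathlib

/-!
Largeness is first tested against an adversary who may expand any term of the current ordinal
instead of the least one (`Wins`).  Expanding the least term is the adversary's best move
(`wins_of_large`), so nothing changes, but the adversarial form is visibly monotone.  It yields that
`ω^n`-largeness passes to supersets (`IsAlphaLarge.mono`), and that colouring an `ω^(n+1)`-large set
with at most `min X` colours leaves an `ω^n`-large colour class (`IsAlphaLarge.pigeonhole`): an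
element of colour `i` acts on the `i`-th summand of `ω^n + ⋯ + ω^n`, so the colours play the
adversary.  Moreover one exponent buys an exponential increase of the minimum (`IsAlphaLarge.grow`),
so two exponents make `s ≤ min X` many 2-colourings constant at once (`IsAlphaLarge.thin`).

The grouping lemma (`grouping`) finds in an `ω^(p+11)`-large set an element `a` and `a` successive
`ω^p`-large blocks above it such that all pairs from different parts have one colour.  Its core is
`dichotomy`.  Let `A` be a finite set all of whose elements are less than `s ≤ min X`.  Thin
`2^(3s)` blocks of `X` until the colour between two blocks depends only on the blocks and the colour
from each `a < s` to a block is constant; pigeonhole and the finite Ramsey theorem then give `s`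
blocks with a single mutual colour `t` and the same colours to `A`.  Either some `a ∈ A` has colour
`t` to these blocks, and `a` with its `s > a` blocks is as required, or every element of `A` has the
other colour to them.  If the second case occurs for `2 a₀` successive pieces above `a₀ = min X`,
each piece has a large subset with a single colour to everything earlier, and `a₀` of these colours
agree; then `a₀` with these subsets is as required.

Finally `ramsey_asymmetric` shows by induction on `g 0 + g 1` that `ω^(11 (g 0 + g 1))`-largeness
suffices for a homogeneous set of some colour `c` that is `ω^(g c)`-large.  Take a grouping with
mutual colour `t` and apply the induction hypothesis to each block, with the goal `g t` lowered by
one.  Either some block gives a set of the other colour, or all give colour `t`, and then `a`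
together with the union of these `a` sets is `ω^(g t)`-large.  With `g 0 = g 1 = x` this needs
exponent `22 x ≤ 300 x`.
-/

/-- An ordinal `α < ω^ω` is represented by the list of exponents of its Cantor
normal form, *least significant first*: the list `[n₀, n₁, …, n_k]` with
`n₀ ≤ n₁ ≤ ⋯ ≤ n_k` represents the ordinal `ω^{n_k} + ⋯ + ω^{n₁} + ω^{n₀}`.
`largeStep α m` is the ordinal `α[m]`:  `0[m] = 0`; `α[m] = β` if `α = β + 1`;
and `α[m] = β + ω^{n-1}·m` if `α = β + ω^n` with `n ≥ 1` (canonical decomposition). -/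
def largeStep : List ℕ → ℕ → List ℕ
  | [], _ => []
  | 0 :: β, _ => β
  | (n + 1) :: β, m => List.replicate m n ++ β

/-- `IsAlphaLarge α X` says that the finite set `X = {x₀ < x₁ < ⋯ < x_{ℓ-1}} ⊆ ℕ`
is `α`-large, i.e. `α[x₀][x₁]⋯[x_{ℓ-1}] = 0`. -/
def IsAlphaLarge (α : List ℕ) (X : Finset ℕ) : Prop :=
  (X.sort (· ≤ ·)).foldl largeStep α = []

/-! ### Adversarial largeness of lists -/

/-- The term list of `ω^m[x]`: nothing if `m = 0`, and `x` copies of `ω^(m-1)` otherwise. -/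
def expand : ℕ → ℕ → Multiset ℕ
  | 0, _ => 0
  | m + 1, x => Multiset.replicate x m

/-- Adversarial largeness.  The elements of `l` are processed in order, and at each of them an
adversary chooses which term `ω^m` of the current ordinal (a multiset of exponents) is replaced by
`ω^m[x]`; `Wins M l` says that the ordinal is always reduced to `0`, and the definition of
`α`-largeness is the special case in which the least term is always chosen. -/
def Wins : Multiset ℕ → List ℕ → Prop
  | M, [] => M = 0
  | M, x :: l => ∀ m N, M = m ::ₘ N → Wins (expand m x + N) l

/-- One downward step: delete a term, or replace a term `ω^(m+1)` by at most `x` copies of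
`ω^m`. -/
inductive Below (x : ℕ) : Multiset ℕ → Multiset ℕ → Prop
  | del (m : ℕ) (N : Multiset ℕ) : Below x N (m ::ₘ N)
  | rep (m k : ℕ) (N : Multiset ℕ) (h : k ≤ x) :
      Below x (Multiset.replicate k m + N) ((m + 1) ::ₘ N)

theorem below_expand (m x : ℕ) (N : Multiset ℕ) : Below x (expand m x + N) (m ::ₘ N) := by
  cases m with
  | zero => simpa [expand] using Below.del (x := x) 0 N
  | succ m => exact Below.rep m x N le_rfl

theorem wins_of_le_aux {l : List ℕ} {x : ℕ}
    (H : ∀ M M' : Multiset ℕ, Below x M' M → Wins M l → Wins M' l) :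
    ∀ D M : Multiset ℕ, Wins (D + M) l → Wins M l := by
  intro D
  induction D using Multiset.induction with
  | empty => intro M h; simpa using h
  | cons a D ih =>
    intro M h
    rw [Multiset.cons_add] at h
    exact ih M (H _ _ (Below.del a _) h)

/-- Winning is monotone in the ordinal, as long as the downward step only uses coefficients bounded
by the elements still to come. -/
theorem wins_below : ∀ (l : List ℕ), l.Pairwise (· < ·) → ∀ (x : ℕ), (∀ y ∈ l, x ≤ y) →
    ∀ M M' : Multiset ℕ, Below x M' M → Wins M l → Wins M' l := by
  intro l
  induction l with
  | nil =>
    intro _ x _ M M' hb hw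
    cases hb <;> simp [Wins] at hw
  | cons y l ih =>
    intro hs x hx M M' hb hw
    rw [List.pairwise_cons] at hs
    have hxl : ∀ z ∈ l, x ≤ z := fun z hz => hx z (List.mem_cons_of_mem _ hz)
    have hyl : ∀ z ∈ l, y ≤ z := fun z hz => (hs.1 z hz).le
    have hxy : x ≤ y := hx y List.mem_cons_self
    intro t N' hN'
    cases hb with
    | del m =>
      subst hN'
      have := hw t (m ::ₘ N') (Multiset.cons_swap _ _ _)
      rw [Multiset.add_cons] at this
      exact ih hs.2 x hxl _ _ (Below.del m _) this
    | rep m k N hk =>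
      have ht : t ∈ Multiset.replicate k m + N := by rw [hN']; exact Multiset.mem_cons_self _ _
      by_cases htN : t ∈ N
      · obtain ⟨E, rfl⟩ := Multiset.exists_cons_of_mem htN
        rw [Multiset.add_cons, Multiset.cons_inj_right] at hN'
        subst hN'
        have := hw t ((m + 1) ::ₘ E) (Multiset.cons_swap _ _ _)
        rw [Multiset.add_cons] at this
        have h2 := ih hs.2 x hxl _ _ (Below.rep m k _ hk) this
        rwa [add_left_comm] at h2
      · -- the chosen term is one of the copies of `ω^m`: compare with expanding `ω^(m+1)`
        have htm : t = m := by
          rcases Multiset.mem_add.1 ht with h | h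
          · exact Multiset.eq_of_mem_replicate h
          · exact absurd h htN
        subst htm
        obtain ⟨k, rfl⟩ : ∃ k', k = k' + 1 := by
          rcases k with _ | k
          · simp at ht; exact absurd ht htN
          · exact ⟨k, rfl⟩
        rw [Multiset.replicate_succ, Multiset.cons_add, Multiset.cons_inj_right] at hN'
        subst hN'
        have h1 := hw (t + 1) N rfl
        obtain ⟨d, rfl⟩ : ∃ d, y = (k + 1) + d := ⟨y - (k + 1), by omega⟩
        have h2 : Wins (Multiset.replicate d t + t ::ₘ (Multiset.replicate k t + N)) l := by
          have e : Multiset.replicate d t + t ::ₘ (Multiset.replicate k t + N)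
              = expand (t + 1) (k + 1 + d) + N := by
            simp only [expand, Multiset.replicate_add]
            rw [Multiset.replicate_one, ← Multiset.singleton_add]
            abel
          rw [e]; exact h1
        have h3 := wins_of_le_aux (ih hs.2 x hxl) _ _ h2
        exact ih hs.2 _ hyl _ _ (below_expand t _ _) h3

theorem wins_of_le {l : List ℕ} (hs : l.Pairwise (· < ·)) (D M : Multiset ℕ)
    (h : Wins (D + M) l) : Wins M l :=
  wins_of_le_aux (x := 0) (wins_below l hs 0 (by simp)) D M h

theorem wins_cons {l : List ℕ} {x : ℕ} (hs : (x :: l).Pairwise (· < ·)) {M : Multiset ℕ}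
    (h : Wins M l) : Wins M (x :: l) := by
  rintro m N rfl
  rw [List.pairwise_cons] at hs
  exact wins_below l hs.2 x (fun y hy => (hs.1 y hy).le) _ _ (below_expand m x N) h

theorem wins_sublist {l l' : List ℕ} (hsub : l.Sublist l') (hs : l'.Pairwise (· < ·))
    {M : Multiset ℕ} (h : Wins M l) : Wins M l' := by
  induction hsub generalizing M with
  | slnil => exact h
  | cons a hsub ih => exact wins_cons hs (ih (List.pairwise_cons.1 hs).2 h)
  | cons_cons a hsub ih =>
    intro m N hM
    exact ih (List.pairwise_cons.1 hs).2 (h m N hM)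

theorem wins_lower {l : List ℕ} (hs : l.Pairwise (· < ·)) (hpos : ∀ y ∈ l, 1 ≤ y) {m u : ℕ}
    (hmu : m ≤ u) (N : Multiset ℕ) (h : Wins (u ::ₘ N) l) : Wins (m ::ₘ N) l := by
  induction u, hmu using Nat.le_induction with
  | base => exact h
  | succ u _ ih =>
    apply ih
    simpa using wins_below l hs 1 hpos _ _ (Below.rep u 1 N le_rfl) h

theorem coe_largeStep (m : ℕ) (β : List ℕ) (x : ℕ) :
    ((largeStep (m :: β) x : List ℕ) : Multiset ℕ) = expand m x + (β : Multiset ℕ) := by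
  cases m with
  | zero => simp [largeStep, expand]
  | succ m => simp [largeStep, expand, ← Multiset.coe_add, Multiset.coe_replicate]

theorem sorted_largeStep {α : List ℕ} (h : α.Pairwise (· ≤ ·)) (x : ℕ) :
    (largeStep α x).Pairwise (· ≤ ·) := by
  match α, h with
  | [], _ => simp [largeStep]
  | 0 :: β, h => exact (List.pairwise_cons.1 h).2
  | (n + 1) :: β, h =>
    rw [List.pairwise_cons] at h
    simp only [largeStep, List.pairwise_append]
    refine ⟨?_, h.2, ?_⟩
    · simp [List.pairwise_replicate]
    · intro a ha b hb
      rw [List.eq_of_mem_replicate ha]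
      exact (Nat.le_succ n).trans (h.1 b hb)

/-- Expanding the least term is the adversary's best move: an ordinal that is reduced to `0` by it
is reduced to `0` whatever the adversary chooses. -/
theorem wins_of_large : ∀ (l : List ℕ), l.Pairwise (· < ·) → ∀ α : List ℕ,
    α.Pairwise (· ≤ ·) → l.foldl largeStep α = [] → Wins (α : Multiset ℕ) l := by
  intro l
  induction l with
  | nil => intro _ α _ h; simpa [Wins] using h
  | cons x l ih =>
    intro hs α hα h t N hN
    have hs' := hs
    rw [List.pairwise_cons] at hs
    rw [List.foldl_cons] at h
    have hw := ih hs.2 _ (sorted_largeStep hα x) h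
    cases α with
    | nil => exact absurd hN.symm (Multiset.cons_ne_zero)
    | cons m β =>
      rw [coe_largeStep] at hw
      rw [← Multiset.cons_coe] at hN
      rcases Multiset.cons_eq_cons.1 hN with ⟨rfl, rfl⟩ | ⟨hne, E, hβ, rfl⟩
      · exact hw
      · have hmt : m ≤ t := by
          have : t ∈ β := by
            rw [← Multiset.mem_coe, hβ]; exact Multiset.mem_cons_self _ _
          exact (List.pairwise_cons.1 hα).1 t this
        obtain ⟨u, rfl⟩ : ∃ u, t = u + 1 := ⟨t - 1, by omega⟩
        -- trade `ω^(u+1)` for `x + 1` copies of `ω^u`, and one of these for `ω^m`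
        rw [hβ] at hw
        have h1 := wins_of_le hs.2 _ _ hw
        have h2 := wins_below l hs.2 (x + 1) (fun y hy => hs.1 y hy) _ _
          (Below.rep u (x + 1) E le_rfl) h1
        rw [Multiset.replicate_succ, Multiset.cons_add] at h2
        have h3 := wins_lower hs.2 (fun y hy => by have := hs.1 y hy; omega)
          (show m ≤ u by omega) _ h2
        rwa [expand, Multiset.add_cons]

theorem foldl_largeStep_nil (l : List ℕ) : l.foldl largeStep [] = [] := by
  induction l with
  | nil => rfl
  | cons x l ih => simpa [largeStep] using ih

theorem large_of_wins : ∀ (l : List ℕ) (α : List ℕ), Wins (α : Multiset ℕ) l →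
    l.foldl largeStep α = [] := by
  intro l
  induction l with
  | nil => intro α h; simpa [Wins] using h
  | cons x l ih =>
    intro α h
    cases α with
    | nil => exact foldl_largeStep_nil _
    | cons m β =>
      rw [List.foldl_cons]
      apply ih
      rw [coe_largeStep]
      exact h m β (by simp)

/-- The colours play the adversary: each element `x` of colour `i` expands the least term of the
`i`-th ordinal, and some colour class reaches `0`. -/
theorem wins_pigeonhole {κ : Type*} [Fintype κ] [Nonempty κ] (c : ℕ → κ) :
    ∀ (l : List ℕ) (a : κ → List ℕ), Wins (∑ i, (a i : Multiset ℕ)) l →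
      ∃ (i : κ) (s : List ℕ), s.Sublist l ∧ (∀ y ∈ s, c y = i) ∧ s.foldl largeStep (a i) = [] := by
  classical
  intro l
  induction l with
  | nil =>
    intro a h
    have i := Classical.arbitrary κ
    refine ⟨i, [], List.Sublist.slnil, by simp, ?_⟩
    have h0 : ∑ i, (a i : Multiset ℕ) = 0 := h
    rw [Finset.sum_eq_zero_iff] at h0
    simpa using h0 i (Finset.mem_univ i)
  | cons x l ih =>
    intro a h
    cases hα : a (c x) with
    | nil => exact ⟨c x, [], List.nil_sublist _, by simp, by simpa using hα⟩
    | cons m β =>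
      have hw : Wins (∑ i, (Function.update a (c x) (largeStep (m :: β) x) i : Multiset ℕ)) l := by
        rw [← Finset.add_sum_erase _ _ (Finset.mem_univ (c x))] at h ⊢
        have e : ∑ i ∈ Finset.univ.erase (c x),
            (Function.update a (c x) (largeStep (m :: β) x) i : Multiset ℕ)
            = ∑ i ∈ Finset.univ.erase (c x), (a i : Multiset ℕ) :=
          Finset.sum_congr rfl fun i hi => by
            rw [Function.update_of_ne (Finset.ne_of_mem_erase hi)]
        rw [e, Function.update_self, coe_largeStep, add_assoc]
        exact h m _ (by rw [hα, ← Multiset.cons_coe, Multiset.cons_add])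
      obtain ⟨j, s, hsub, hs, hf⟩ := ih _ hw
      by_cases hj : j = c x
      · subst hj
        refine ⟨c x, x :: s, hsub.cons_cons x, ?_, ?_⟩
        · simpa using hs
        · rw [Function.update_self] at hf
          rw [List.foldl_cons, hα, hf]
      · rw [Function.update_of_ne hj] at hf
        exact ⟨j, s, hsub.cons x, hs, hf⟩

/-- A `(β + α)`-large list splits into an `α`-large part followed by a `β`-large part. -/
theorem foldl_largeStep_append_split (β : List ℕ) : ∀ (l α : List ℕ),
    l.foldl largeStep (α ++ β) = [] →
      ∃ l₁ l₂, l = l₁ ++ l₂ ∧ l₁.foldl largeStep α = [] ∧ l₂.foldl largeStep β = [] := by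
  intro l
  induction l with
  | nil => intro α h; simp at h; exact ⟨[], [], by simp [h.1, h.2]⟩
  | cons x l ih =>
    intro α h
    cases α with
    | nil => exact ⟨[], x :: l, rfl, rfl, h⟩
    | cons m α =>
      have e : largeStep (m :: α ++ β) x = largeStep (m :: α) x ++ β := by
        cases m <;> simp [largeStep]
      rw [List.foldl_cons, e] at h
      obtain ⟨l₁, l₂, rfl, h1, h2⟩ := ih _ h
      exact ⟨x :: l₁, l₂, rfl, h1, h2⟩

/-- An `α`-large list has a sublist whose processing removes exactly the terms of `α` from every
`β + α`. -/
theorem foldl_largeStep_append_sublist : ∀ (l α : List ℕ), l.foldl largeStep α = [] →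
    ∃ p : List ℕ, p.Sublist l ∧ ∀ β, p.foldl largeStep (α ++ β) = β := by
  intro l
  induction l with
  | nil => intro α h; simp at h; exact ⟨[], by simp [h]⟩
  | cons x l ih =>
    intro α h
    cases α with
    | nil => exact ⟨[], by simp⟩
    | cons m α =>
      obtain ⟨p, hp, hβ⟩ := ih _ h
      refine ⟨x :: p, hp.cons_cons x, fun β => ?_⟩
      have e : largeStep (m :: α ++ β) x = largeStep (m :: α) x ++ β := by
        cases m <;> simp [largeStep]
      rw [List.foldl_cons, e, hβ]

/-! ### Blocks, pigeonhole and growth for finite sets -/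

/-- `B 0 < B 1 < ⋯ < B (k - 1)` are successive `ω^n`-large subsets of `X`. -/
structure Blocks (n k : ℕ) (X : Finset ℕ) (B : ℕ → Finset ℕ) : Prop where
  sub : ∀ i < k, B i ⊆ X
  large : ∀ i < k, IsAlphaLarge [n] (B i)
  lt : ∀ i j, i < j → j < k → ∀ a ∈ B i, ∀ b ∈ B j, a < b

theorem Blocks.mono {n k k' : ℕ} {X Y : Finset ℕ} {B : ℕ → Finset ℕ} (h : Blocks n k X B)
    (hk : k' ≤ k) (hXY : X ⊆ Y) : Blocks n k' Y B :=
  ⟨fun i hi => (h.sub i (hi.trans_le hk)).trans hXY, fun i hi => h.large i (hi.trans_le hk),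
    fun i j hij hj => h.lt i j hij (hj.trans_le hk)⟩

theorem Blocks.shrink {n m k : ℕ} {X : Finset ℕ} {B T : ℕ → Finset ℕ} (h : Blocks n k X B)
    (hT : ∀ i < k, T i ⊆ B i) (hl : ∀ i < k, IsAlphaLarge [m] (T i)) : Blocks m k X T :=
  ⟨fun i hi => (hT i hi).trans (h.sub i hi), hl,
    fun i j hij hj a ha b hb =>
      h.lt i j hij hj a (hT i (hij.trans hj) ha) b (hT j hj hb)⟩

theorem sort_toFinset_of_lt {l : List ℕ} (h : l.Pairwise (· < ·)) :
    l.toFinset.sort (· ≤ ·) = l :=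
  (List.toFinset_sort (· ≤ ·) (h.imp fun hab => hab.ne)).2 (h.imp fun hab => hab.le)

theorem sort_pairwise_lt (X : Finset ℕ) : (X.sort (· ≤ ·)).Pairwise (· < ·) :=
  (Finset.sortedLT_sort X).pairwise

theorem sort_sublist {X Y : Finset ℕ} (h : X ⊆ Y) :
    (X.sort (· ≤ ·)).Sublist (Y.sort (· ≤ ·)) := by
  have e : ((Y.sort (· ≤ ·)).filter (· ∈ X)).toFinset = X := by
    ext a; simp only [List.mem_toFinset, List.mem_filter, Finset.mem_sort, decide_eq_true_eq]
    exact ⟨fun h => h.2, fun ha => ⟨h ha, ha⟩⟩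
  have e2 := sort_toFinset_of_lt ((sort_pairwise_lt Y).filter (fun a => decide (a ∈ X)))
  rw [e] at e2
  rw [e2]
  exact List.filter_sublist

theorem isAlphaLarge_toFinset {α l : List ℕ} (h : l.Pairwise (· < ·))
    (hf : l.foldl largeStep α = []) : IsAlphaLarge α l.toFinset := by
  rw [IsAlphaLarge, sort_toFinset_of_lt h, hf]

/-- `ω^n`-largeness passes to supersets. -/
theorem IsAlphaLarge.mono {n : ℕ} {X Y : Finset ℕ} (h : IsAlphaLarge [n] X) (hXY : X ⊆ Y) :
    IsAlphaLarge [n] Y :=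
  large_of_wins _ _ (wins_sublist (sort_sublist hXY) (sort_pairwise_lt Y)
    (wins_of_large _ (sort_pairwise_lt X) _ (by simp) h))

theorem IsAlphaLarge.nonempty {n : ℕ} {X : Finset ℕ} (h : IsAlphaLarge [n] X) : X.Nonempty := by
  rw [Finset.nonempty_iff_ne_empty]
  rintro rfl
  simp [IsAlphaLarge] at h

theorem sort_eq_cons_of_large {n : ℕ} {X : Finset ℕ} (h : IsAlphaLarge [n] X) :
    ∃ x l, X.sort (· ≤ ·) = x :: l ∧ x ∈ X ∧ (∀ y ∈ X, x ≤ y) ∧ l.Pairwise (· < ·) ∧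
      (∀ y ∈ l, y ∈ X ∧ x < y) := by
  have hm : ∀ y, y ∈ X.sort (· ≤ ·) ↔ y ∈ X := fun y => Finset.mem_sort _
  have hs := sort_pairwise_lt X
  cases e : X.sort (· ≤ ·) with
  | nil =>
    obtain ⟨y, hy⟩ := h.nonempty
    rw [← hm, e] at hy
    simp at hy
  | cons x l =>
    rw [e] at hs hm
    rw [List.pairwise_cons] at hs
    refine ⟨x, l, rfl, (hm x).1 (by simp), fun y hy => ?_, hs.2, fun y hy => ?_⟩
    · rcases List.mem_cons.1 ((hm y).2 hy) with rfl | h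
      · exact le_rfl
      · exact (hs.1 y h).le
    · exact ⟨(hm y).1 (List.mem_cons_of_mem _ hy), hs.1 y hy⟩

theorem foldl_cons_succ (n x : ℕ) (l : List ℕ) :
    (x :: l).foldl largeStep [n + 1] = l.foldl largeStep (List.replicate x n) := by
  simp [largeStep]

theorem blocks_of_foldl (n : ℕ) : ∀ (k : ℕ) (l : List ℕ), l.Pairwise (· < ·) →
    l.foldl largeStep (List.replicate k n) = [] → ∃ B, Blocks n k l.toFinset B := by
  intro k
  induction k with
  | zero => intro l _ _; exact ⟨fun _ => ∅, by simp, by simp, by simp⟩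
  | succ k ih =>
    intro l hs h
    obtain ⟨l₁, l₂, rfl, h1, h2⟩ := foldl_largeStep_append_split (List.replicate k n) l [n] h
    rw [List.pairwise_append] at hs
    obtain ⟨B, hB⟩ := ih l₂ hs.2.1 h2
    refine ⟨fun i => Nat.casesOn i l₁.toFinset B, ?_, ?_, ?_⟩
    · rintro (_ | i) hi
      · simp
      · rw [List.toFinset_append]
        exact (hB.sub i (by omega)).trans Finset.subset_union_right
    · rintro (_ | i) hi
      · exact isAlphaLarge_toFinset hs.1 h1
      · exact hB.large i (by omega)
    · rintro (_ | i) (_ | j) hij hj a ha b hb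
      · omega
      · exact hs.2.2 a (List.mem_toFinset.1 ha) b
          (List.mem_toFinset.1 (hB.sub j (by omega) hb))
      · omega
      · exact hB.lt i j (by omega) (by omega) a ha b hb

theorem foldl_of_blocks (n : ℕ) : ∀ (k : ℕ) (X : Finset ℕ) (B : ℕ → Finset ℕ), Blocks n k X B →
    ∃ l : List ℕ, l.Pairwise (· < ·) ∧ (∀ y ∈ l, ∃ i < k, y ∈ B i) ∧
      l.foldl largeStep (List.replicate k n) = [] := by
  intro k
  induction k with
  | zero => intro X B _; exact ⟨[], by simp⟩
  | succ k ih =>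
    intro X B hB
    obtain ⟨l, hs, hl, hf⟩ := ih X (fun i => B (i + 1))
      ⟨fun i hi => hB.sub _ (by omega), fun i hi => hB.large _ (by omega),
        fun i j hij hj => hB.lt _ _ (by omega) (by omega)⟩
    obtain ⟨p, hp, hβ⟩ := foldl_largeStep_append_sublist _ _ (hB.large 0 (by omega))
    have hp0 : ∀ y ∈ p, y ∈ B 0 := fun y hy => (Finset.mem_sort (· ≤ ·)).1 (hp.subset hy)
    refine ⟨p ++ l, ?_, ?_, ?_⟩
    · rw [List.pairwise_append]
      refine ⟨(sort_pairwise_lt _).sublist hp, hs, fun a ha b hb => ?_⟩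
      obtain ⟨i, hi, hb⟩ := hl b hb
      exact hB.lt 0 (i + 1) (by omega) (by omega) a (hp0 a ha) b hb
    · intro y hy
      rcases List.mem_append.1 hy with h | h
      · exact ⟨0, by omega, hp0 y h⟩
      · obtain ⟨i, hi, h⟩ := hl y h
        exact ⟨i + 1, by omega, h⟩
    · rw [List.foldl_append, List.replicate_succ, ← List.singleton_append, hβ, hf]

/-- An `ω^(n+1)`-large set consists of its minimum `x` followed by `x` blocks that are
`ω^n`-large. -/
theorem IsAlphaLarge.blocks {n : ℕ} {X : Finset ℕ} (h : IsAlphaLarge [n + 1] X) :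
    ∃ x ∈ X, (∀ y ∈ X, x ≤ y) ∧ ∃ B, Blocks n x (X.filter (x < ·)) B := by
  obtain ⟨x, l, e, hx, hmin, hs, hl⟩ := sort_eq_cons_of_large h
  rw [IsAlphaLarge, e, foldl_cons_succ] at h
  obtain ⟨B, hB⟩ := blocks_of_foldl n x l hs h
  refine ⟨x, hx, hmin, B, hB.mono le_rfl fun y hy => ?_⟩
  rw [Finset.mem_filter]
  exact hl y (List.mem_toFinset.1 hy)

/-- Converse of `IsAlphaLarge.blocks`; the element `a` need not be the minimum of `Z`. -/
theorem isAlphaLarge_of_blocks {n a : ℕ} {Z : Finset ℕ} {B : ℕ → Finset ℕ} (ha : a ∈ Z)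
    (hB : Blocks n a Z B) (hlt : ∀ i < a, ∀ y ∈ B i, a < y) : IsAlphaLarge [n + 1] Z := by
  obtain ⟨l, hs, hl, hf⟩ := foldl_of_blocks n a Z B hB
  have hs' : (a :: l).Pairwise (· < ·) := by
    rw [List.pairwise_cons]
    refine ⟨fun y hy => ?_, hs⟩
    obtain ⟨i, hi, hy⟩ := hl y hy
    exact hlt i hi y hy
  refine (isAlphaLarge_toFinset hs' (by rw [foldl_cons_succ, hf])).mono fun y hy => ?_
  rw [List.mem_toFinset, List.mem_cons] at hy
  rcases hy with rfl | hy
  · exact ha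
  · obtain ⟨i, hi, hy⟩ := hl y hy
    exact hB.sub i hi hy

theorem IsAlphaLarge.pred {n : ℕ} {X : Finset ℕ} (h : IsAlphaLarge [n + 1] X)
    (hpos : ∀ y ∈ X, 1 ≤ y) : IsAlphaLarge [n] X := by
  obtain ⟨x, hx, -, B, hB⟩ := h.blocks
  exact (hB.large 0 (hpos x hx)).mono ((hB.sub 0 (hpos x hx)).trans (Finset.filter_subset _ _))

theorem IsAlphaLarge.of_le {n m : ℕ} {X : Finset ℕ} (hnm : n ≤ m) (h : IsAlphaLarge [m] X)
    (hpos : ∀ y ∈ X, 1 ≤ y) : IsAlphaLarge [n] X := by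
  induction m, hnm using Nat.le_induction with
  | base => exact h
  | succ m _ ih => exact ih (h.pred hpos)

theorem isAlphaLarge_singleton (y : ℕ) : IsAlphaLarge [0] {y} := by
  simp [IsAlphaLarge, largeStep]

/-- Pigeonhole principle: colouring an `ω^(n+1)`-large set with at most as many colours as its
minimum leaves an `ω^n`-large colour class. -/
theorem IsAlphaLarge.pigeonhole {κ : Type*} [Fintype κ] [Nonempty κ] {n : ℕ} {X : Finset ℕ}
    (h : IsAlphaLarge [n + 1] X) (c : ℕ → κ) (hk : ∀ y ∈ X, Fintype.card κ ≤ y) :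
    ∃ Y ⊆ X, IsAlphaLarge [n] Y ∧ ∃ i, ∀ y ∈ Y, c y = i := by
  obtain ⟨x, l, e, hx, -, hs, hl⟩ := sort_eq_cons_of_large h
  rw [IsAlphaLarge, e, foldl_cons_succ] at h
  have hw := wins_of_large l hs _ (by simp [List.pairwise_replicate]) h
  obtain ⟨d, hd⟩ := Nat.exists_eq_add_of_le' (hk x hx)
  rw [hd, Multiset.coe_replicate, Multiset.replicate_add] at hw
  have hw' := wins_of_le hs _ _ hw
  obtain ⟨i, s, hsub, hc, hf⟩ := wins_pigeonhole c l (fun _ => [n])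
    (by simpa [Multiset.nsmul_singleton] using hw')
  exact ⟨s.toFinset, fun y hy => (hl y (hsub.subset (List.mem_toFinset.1 hy))).1,
    isAlphaLarge_toFinset (hs.sublist hsub) hf, i, fun y hy => hc y (List.mem_toFinset.1 hy)⟩

/-- Growth: at the cost of one exponent, the minimum grows exponentially.  Among the blocks of an
`ω^(n+2)`-large set the minima at least double from one block to the next. -/
theorem IsAlphaLarge.grow {n s : ℕ} {X : Finset ℕ} (h : IsAlphaLarge [n + 2] X) (hs : 1 ≤ s)
    (hX : ∀ y ∈ X, s ≤ y) : ∃ Y ⊆ X, IsAlphaLarge [n + 1] Y ∧ ∀ y ∈ Y, 2 ^ s ≤ y := by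
  obtain ⟨x, hx, -, B, hB⟩ := h.blocks
  have hsx := hX x hx
  have key : ∀ i < x, ∀ y ∈ B i, 2 ^ i * (x + 1) ≤ y := by
    intro i
    induction i with
    | zero =>
      intro hi y hy
      have := (Finset.mem_filter.1 (hB.sub 0 hi hy)).2
      simpa using this
    | succ i ih =>
      intro hi y hy
      obtain ⟨b, hb, -, C, hC⟩ := (hB.large i (by omega)).blocks
      have hCl : ∀ j < b, ∀ z ∈ C j, b + j < z := by
        intro j
        induction j with
        | zero => intro hj z hz; simpa using (Finset.mem_filter.1 (hC.sub 0 hj hz)).2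
        | succ j ihj =>
          intro hj z hz
          obtain ⟨w, hw⟩ := (hC.large j (by omega)).nonempty
          have h1 := ihj (by omega) w hw
          have h2 := hC.lt j (j + 1) (by omega) hj w hw z hz
          omega
      have hb1 := ih (by omega) b hb
      have hb0 : 1 ≤ b := hs.trans (hX b (Finset.mem_filter.1 (hB.sub i (by omega) hb)).1)
      obtain ⟨z, hz⟩ := (hC.large (b - 1) (by omega)).nonempty
      have h1 := hCl (b - 1) (by omega) z hz
      have h2 := hB.lt i (i + 1) (by omega) hi z
        (Finset.mem_filter.1 (hC.sub (b - 1) (by omega) hz)).1 y hy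
      rw [pow_succ]
      calc 2 ^ i * 2 * (x + 1) = 2 * (2 ^ i * (x + 1)) := by ring
        _ ≤ 2 * b := by omega
        _ ≤ y := by omega
  refine ⟨B (x - 1), (hB.sub _ (by omega)).trans (Finset.filter_subset _ _),
    hB.large _ (by omega), fun y hy => ?_⟩
  have h1 := key (x - 1) (by omega) y hy
  calc 2 ^ s ≤ 2 ^ x := Nat.pow_le_pow_right (by norm_num) hsx
    _ = 2 ^ (x - 1) * 2 := by rw [← pow_succ]; congr 1; omega
    _ ≤ 2 ^ (x - 1) * (x + 1) := Nat.mul_le_mul_left _ (by omega)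
    _ ≤ y := h1

/-- Thinning: if all elements of `X` are at least `s`, then `s` many 2-colourings of `X` can be
made simultaneously constant at the cost of two exponents. -/
theorem IsAlphaLarge.thin {n s : ℕ} {X : Finset ℕ} (h : IsAlphaLarge [n + 2] X) (hs : 1 ≤ s)
    (hX : ∀ y ∈ X, s ≤ y) (c : ℕ → ℕ → Fin 2) :
    ∃ Y ⊆ X, IsAlphaLarge [n] Y ∧ ∃ v : ℕ → Fin 2, ∀ i < s, ∀ y ∈ Y, c i y = v i := by
  obtain ⟨Y, hYX, hY, hge⟩ := h.grow hs hX
  obtain ⟨Z, hZY, hZ, v, hv⟩ := hY.pigeonhole (κ := Fin s → Fin 2) (fun y i => c i y)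
    (fun y hy => by simpa using hge y hy)
  refine ⟨Z, hZY.trans hYX, hZ, fun i => if hi : i < s then v ⟨i, hi⟩ else 0, fun i hi y hy => ?_⟩
  simp only [dif_pos hi, ← hv y hy]

/-! ### Finite Ramsey theorem and the grouping lemma -/

/-- Finite Ramsey theorem for pairs and two colours, with the Erdős–Szekeres-style bound
`2 ^ (p + q)`. -/
theorem finite_ramsey (G : ℕ → ℕ → Fin 2) : ∀ (s p q : ℕ), p + q = s → ∀ S : Finset ℕ,
    2 ^ s ≤ S.card →
      (∃ J ⊆ S, J.card = p ∧ ∀ i ∈ J, ∀ j ∈ J, i < j → G i j = 0) ∨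
      (∃ J ⊆ S, J.card = q ∧ ∀ i ∈ J, ∀ j ∈ J, i < j → G i j = 1) := by
  classical
  intro s
  induction s with
  | zero =>
    intro p q hpq S _
    exact Or.inl ⟨∅, by simp, by simp; omega, by simp⟩
  | succ s ih =>
    intro p q hpq S hS
    rcases p with _ | p
    · exact Or.inl ⟨∅, by simp, by simp, by simp⟩
    rcases q with _ | q
    · exact Or.inr ⟨∅, by simp, by simp, by simp⟩
    have hne : S.Nonempty := Finset.card_pos.1 (lt_of_lt_of_le (by positivity) hS)
    obtain ⟨v, hv, hmin⟩ : ∃ v ∈ S, ∀ y ∈ S, v ≤ y := ⟨S.min' hne, S.min'_mem hne, S.min'_le⟩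
    -- adjoining the minimum `v` to a clique inside one of its neighbourhoods
    have ext : ∀ (c : Fin 2) (J : Finset ℕ), J ⊆ (S.erase v).filter (fun j => G v j = c) →
        (∀ i ∈ J, ∀ j ∈ J, i < j → G i j = c) →
        insert v J ⊆ S ∧ (insert v J).card = J.card + 1 ∧
          ∀ i ∈ insert v J, ∀ j ∈ insert v J, i < j → G i j = c := by
      intro c J hJ hc
      have hJ' : ∀ y ∈ J, y ≠ v ∧ y ∈ S ∧ G v y = c := fun y hy => by
        simpa [and_assoc] using hJ hy
      refine ⟨?_, ?_, ?_⟩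
      · intro y hy
        rcases Finset.mem_insert.1 hy with rfl | hy
        · exact hv
        · exact (hJ' y hy).2.1
      · exact Finset.card_insert_of_notMem fun h => (hJ' v h).1 rfl
      · intro i hi j hj hij
        rcases Finset.mem_insert.1 hj with rfl | hjJ
        · rcases Finset.mem_insert.1 hi with rfl | hi
          · exact absurd hij (lt_irrefl _)
          · exact absurd hij (not_lt.2 (hmin i (hJ' i hi).2.1))
        · rcases Finset.mem_insert.1 hi with rfl | hi
          · exact (hJ' j hjJ).2.2
          · exact hc i hi j hjJ hij
    have hcard : ((S.erase v).filter (fun j => G v j = 0)).card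
        + ((S.erase v).filter (fun j => G v j = 1)).card + 1 = S.card := by
      have h1 := Finset.card_filter_add_card_filter_not (s := S.erase v) (fun j => G v j = 0)
      have h2 : (S.erase v).filter (fun j => ¬ G v j = 0)
          = (S.erase v).filter (fun j => G v j = 1) :=
        Finset.filter_congr fun j _ => by omega
      rw [h2] at h1
      rw [h1, Finset.card_erase_add_one hv]
    rw [pow_succ] at hS
    by_cases h0 : 2 ^ s ≤ ((S.erase v).filter (fun j => G v j = 0)).card
    · rcases ih p (q + 1) (by omega) _ h0 with ⟨J, hJ, hJc, hJG⟩ | ⟨J, hJ, hJc, hJG⟩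
      · obtain ⟨e1, e2, e3⟩ := ext 0 J hJ hJG
        exact Or.inl ⟨_, e1, by omega, e3⟩
      · exact Or.inr ⟨J, hJ.trans ((Finset.filter_subset _ _).trans (Finset.erase_subset _ _)),
          hJc, hJG⟩
    · have h1 : 2 ^ s ≤ ((S.erase v).filter (fun j => G v j = 1)).card := by omega
      rcases ih (p + 1) q (by omega) _ h1 with ⟨J, hJ, hJc, hJG⟩ | ⟨J, hJ, hJc, hJG⟩
      · exact Or.inl ⟨J, hJ.trans ((Finset.filter_subset _ _).trans (Finset.erase_subset _ _)),
          hJc, hJG⟩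
      · obtain ⟨e1, e2, e3⟩ := ext 1 J hJ hJG
        exact Or.inr ⟨_, e1, by omega, e3⟩

theorem exists_enum (J : Finset ℕ) {k : ℕ} (hk : k ≤ J.card) :
    ∃ e : ℕ → ℕ, (∀ i < k, e i ∈ J) ∧ ∀ i j, i < j → j < k → e i < e j := by
  refine ⟨fun i => if h : i < J.card then J.orderEmbOfFin rfl ⟨i, h⟩ else 0, ?_, ?_⟩
  · intro i hi
    simp only [dif_pos (hi.trans_le hk)]
    exact Finset.orderEmbOfFin_mem _ _ _
  · intro i j hij hj
    simp only [dif_pos (hj.trans_le hk), dif_pos ((hij.trans hj).trans_le hk)]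
    exact (J.orderEmbOfFin rfl).strictMono hij

theorem Blocks.reindex {n k k' : ℕ} {X : Finset ℕ} {B : ℕ → Finset ℕ} (h : Blocks n k X B)
    {e : ℕ → ℕ} (he : ∀ i < k', e i < k) (hlt : ∀ i j, i < j → j < k' → e i < e j) :
    Blocks n k' X (fun i => B (e i)) :=
  ⟨fun i hi => h.sub _ (he i hi), fun i hi => h.large _ (he i hi),
    fun i j hij hj => h.lt _ _ (hlt i j hij hj) (he j hj)⟩

theorem three_mul_le (s : ℕ) (hs : 1 ≤ s) : 3 * s ≤ 2 ^ 2 ^ s := by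
  have h1 : 3 * s ≤ 2 ^ (s + 1) := by
    induction s, hs using Nat.le_induction with
    | base => norm_num
    | succ s hs ih => rw [pow_succ]; omega
  exact h1.trans (Nat.pow_le_pow_right (by norm_num) Nat.lt_two_pow_self)

/-- The dichotomy.  Let `A` lie below an `ω^(p+8)`-large set `X`.  Then either some `a ∈ A` together
with `s > a` blocks in `X` is homogeneous as far as pairs from different parts are concerned, or
some `ω^p`-large `T ⊆ X` has a single colour to all of `A`. -/
theorem dichotomy (f : ℕ → ℕ → Fin 2) {p s : ℕ} {X A : Finset ℕ} (h : IsAlphaLarge [p + 8] X)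
    (hs : 1 ≤ s) (hX : ∀ y ∈ X, s ≤ y) (hA : ∀ a ∈ A, a < s) :
    (∃ a ∈ A, ∃ t T, Blocks p s X T ∧ (∀ i < s, ∀ y ∈ T i, f a y = t) ∧
      ∀ i j, i < j → j < s → ∀ y ∈ T i, ∀ z ∈ T j, f y z = t) ∨
    ∃ d, ∃ T ⊆ X, IsAlphaLarge [p] T ∧ ∀ a ∈ A, ∀ y ∈ T, f a y = d := by
  classical
  obtain ⟨Y₁, hY₁, h₁, hge₁⟩ := h.grow (n := p + 6) hs hX
  obtain ⟨Y₂, hY₂, h₂, hge₂⟩ := h₁.grow (n := p + 5) Nat.one_le_two_pow hge₁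
  obtain ⟨Y, hY₃, hY, hge₃⟩ := h₂.grow (n := p + 4) Nat.one_le_two_pow hge₂
  have hYX : Y ⊆ X := hY₃.trans (hY₂.trans hY₁)
  -- `2 ^ (3 * s)` blocks suffice for a pigeonhole with `2 ^ s` classes followed by Ramsey's theorem
  set K := 2 ^ (3 * s) with hK
  have hge : ∀ y ∈ Y, K ≤ y := fun y hy =>
    (Nat.pow_le_pow_right (by norm_num) (three_mul_le s hs)).trans (hge₃ y hy)
  obtain ⟨b, hbY, -, B, hB'⟩ := hY.blocks
  have hB : Blocks (p + 4) K Y B := hB'.mono (hge b hbY) (Finset.filter_subset _ _)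
  have thin1 : ∀ j, ∃ (T : Finset ℕ) (v : ℕ → Fin 2), j < K → T ⊆ B j ∧ IsAlphaLarge [p + 2] T ∧
      ∀ a, (∀ z ∈ B j, a < z) → ∀ y ∈ T, f a y = v a := by
    intro j
    by_cases hj : j < K
    · obtain ⟨x, hx, hmin, -⟩ := (hB.large j hj).blocks
      have hx1 : 1 ≤ x := hs.trans (hX x (hYX (hB.sub j hj hx)))
      obtain ⟨T, hT, hTl, v, hv⟩ := (hB.large j hj).thin (n := p + 2) hx1 hmin f
      exact ⟨T, v, fun _ => ⟨hT, hTl, fun a ha => hv a (ha x hx)⟩⟩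
    · exact ⟨∅, fun _ => 0, fun h => absurd h hj⟩
  choose T v hT using thin1
  have thin2 : ∀ i, ∃ (U : Finset ℕ) (w : ℕ → Fin 2), i < K → U ⊆ T i ∧ IsAlphaLarge [p] U ∧
      ∀ j < K, ∀ y ∈ U, v j y = w j := by
    intro i
    by_cases hi : i < K
    · obtain ⟨U, hU, hUl, w, hw⟩ := (hT i hi).2.1.thin (n := p) (s := K) Nat.one_le_two_pow
        (fun y hy => hge y (hB.sub i hi ((hT i hi).1 hy))) v
      exact ⟨U, w, fun _ => ⟨hU, hUl, hw⟩⟩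
    · exact ⟨∅, fun _ => 0, fun h => absurd h hi⟩
  choose U w hU using thin2
  have hUB : Blocks p K X U :=
    (hB.shrink (fun i hi => (hU i hi).1.trans (hT i hi).1) (fun i hi => (hU i hi).2.1)).mono
      le_rfl hYX
  have cross : ∀ i j, i < j → j < K → ∀ y ∈ U i, ∀ z ∈ U j, f y z = w i j := by
    intro i j hij hj y hy z hz
    have hi := hij.trans hj
    rw [(hT j hj).2.2 y (fun z' hz' => hB.lt i j hij hj y
      ((hT i hi).1 ((hU i hi).1 hy)) z' hz') z ((hU j hj).1 hz)]
    exact (hU i hi).2.2 j hj y hy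
  have toA : ∀ j < K, ∀ a < s, ∀ y ∈ U j, f a y = v j a := fun j hj a ha y hy =>
    (hT j hj).2.2 a (fun z hz => ha.trans_le (hX z (hYX (hB.sub j hj hz)))) y ((hU j hj).1 hy)
  obtain ⟨φ, -, hφ⟩ := Finset.exists_le_card_fiber_of_mul_le_card_of_maps_to
    (s := Finset.range K) (t := (Finset.univ : Finset (Fin s → Fin 2)))
    (f := fun j a => v j a) (n := 2 ^ (s + s)) (by simp) Finset.univ_nonempty
    (by simp [hK, ← pow_add]; exact le_of_eq (by congr 1; omega))
  obtain ⟨t, J, hJ, hJc, hJG⟩ : ∃ t, ∃ J ⊆ (Finset.range K).filter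
      (fun j => (fun a : Fin s => v j a) = φ), J.card = s ∧
      ∀ i ∈ J, ∀ j ∈ J, i < j → w i j = t := by
    rcases finite_ramsey w (s + s) s s rfl _ hφ with h | h
    · exact ⟨0, h⟩
    · exact ⟨1, h⟩
  have hJK : ∀ j ∈ J, j < K := fun j hj =>
    Finset.mem_range.1 (Finset.mem_filter.1 (hJ hj)).1
  have hJφ : ∀ j ∈ J, ∀ a, ∀ ha : a < s, v j a = φ ⟨a, ha⟩ := fun j hj a ha =>
    congrFun (Finset.mem_filter.1 (hJ hj)).2 ⟨a, ha⟩
  by_cases hex : ∃ a, ∃ ha : a < s, a ∈ A ∧ φ ⟨a, ha⟩ = t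
  · left
    obtain ⟨a, has, haA, hat⟩ := hex
    obtain ⟨e, heJ, helt⟩ := exists_enum J hJc.ge
    refine ⟨a, haA, t, fun i => U (e i), hUB.reindex (fun i hi => hJK _ (heJ i hi)) helt, ?_, ?_⟩
    · intro i hi y hy
      rw [toA _ (hJK _ (heJ i hi)) a has y hy, hJφ _ (heJ i hi) a has, hat]
    · intro i j hij hj y hy z hz
      rw [cross _ _ (helt i j hij hj) (hJK _ (heJ j hj)) y hy z hz]
      exact hJG _ (heJ i (hij.trans hj)) _ (heJ j hj) (helt i j hij hj)
  · right
    push Not at hex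
    obtain ⟨j, hj⟩ : J.Nonempty := Finset.card_pos.1 (by omega)
    refine ⟨1 - t, U j, hUB.sub j (hJK j hj), hUB.large j (hJK j hj), fun a ha y hy => ?_⟩
    rw [toA j (hJK j hj) a (hA a ha) y hy, hJφ j hj a (hA a ha)]
    have := hex a (hA a ha) ha
    omega

/-- The grouping lemma: an `ω^(p+11)`-large set contains an element `a` and `a` successive
`ω^p`-large blocks above it such that all pairs from different parts have the same colour. -/
theorem grouping (f : ℕ → ℕ → Fin 2) {p : ℕ} {X : Finset ℕ} (hpos : ∀ y ∈ X, 1 ≤ y)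
    (h : IsAlphaLarge [p + 11] X) :
    ∃ a ∈ X, ∃ t T, Blocks p a X T ∧ (∀ i < a, ∀ y ∈ T i, a < y ∧ f a y = t) ∧
      ∀ i j, i < j → j < a → ∀ y ∈ T i, ∀ z ∈ T j, f y z = t := by
  classical
  obtain ⟨a₀, ha₀, -, B, hB⟩ := h.blocks
  have ha1 := hpos a₀ ha₀
  have hB0 : ∀ y ∈ B 0, y ∈ X ∧ a₀ < y := fun y hy => Finset.mem_filter.1 (hB.sub 0 ha1 hy)
  obtain ⟨Y, hYB, hY, hge⟩ := (hB.large 0 ha1).grow (n := p + 8) (s := a₀ + 1) (by omega)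
    (fun y hy => (hB0 y hy).2)
  obtain ⟨b, hb, -, P, hP'⟩ := hY.blocks
  have hb2 : 2 * a₀ ≤ b := by
    refine le_trans ?_ (hge b hb)
    rw [pow_succ, mul_comm]
    exact Nat.mul_le_mul_right _ Nat.lt_two_pow_self.le
  have hP : Blocks (p + 8) (2 * a₀) Y P := hP'.mono hb2 (Finset.filter_subset _ _)
  have hYX : ∀ y ∈ Y, y ∈ X ∧ a₀ < y := fun y hy => hB0 y (hYB hy)
  have hd : ∀ j, 2 * a₀ ≤ j ∨ ∃ s ∈ P j, (∀ y ∈ P j, s ≤ y) ∧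
      ((∃ a ∈ X.filter (· < s), ∃ t T, Blocks p s (P j) T ∧ (∀ i < s, ∀ y ∈ T i, f a y = t) ∧
        ∀ i j, i < j → j < s → ∀ y ∈ T i, ∀ z ∈ T j, f y z = t) ∨
      ∃ d, ∃ T ⊆ P j, IsAlphaLarge [p] T ∧ ∀ a ∈ X.filter (· < s), ∀ y ∈ T, f a y = d) := by
    intro j
    by_cases hj : j < 2 * a₀
    · obtain ⟨s, hs, hmin, -⟩ := (hP.large j hj).blocks
      exact Or.inr ⟨s, hs, hmin, dichotomy f (hP.large j hj)
        (hpos s (hYX s (hP.sub j hj hs)).1) hmin (fun a ha => (Finset.mem_filter.1 ha).2)⟩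
    · exact Or.inl (not_lt.1 hj)
  by_cases hex : ∃ j < 2 * a₀, ∃ s, (∀ y ∈ P j, s ≤ y) ∧
      ∃ a ∈ X.filter (· < s), ∃ t T, Blocks p s (P j) T ∧ (∀ i < s, ∀ y ∈ T i, f a y = t) ∧
        ∀ i j, i < j → j < s → ∀ y ∈ T i, ∀ z ∈ T j, f y z = t
  · obtain ⟨j, hj, s, hmin, a, ha, t, T, hT, h1, h2⟩ := hex
    obtain ⟨haX, has⟩ := Finset.mem_filter.1 ha
    refine ⟨a, haX, t, T, hT.mono has.le fun y hy => (hYX y (hP.sub j hj hy)).1, ?_, ?_⟩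
    · exact fun i hi y hy => ⟨has.trans_le (hmin y (hT.sub i (hi.trans has) hy)),
        h1 i (hi.trans has) y hy⟩
    · exact fun i j hij hj => h2 i j hij (hj.trans has)
  · -- every piece `P j` has a large subset with a single colour `d j` to everything below `P j`
    have hd' : ∀ j, ∃ (d : Fin 2) (T : Finset ℕ), j < 2 * a₀ → T ⊆ P j ∧ IsAlphaLarge [p] T ∧
        ∀ a ∈ X, (∀ y ∈ P j, a < y) → ∀ y ∈ T, f a y = d := by
      intro j
      rcases hd j with h | ⟨s, hs, hmin, h | ⟨d, T, hT, hTl, hc⟩⟩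
      · exact ⟨0, ∅, fun h' => absurd h' (not_lt.2 h)⟩
      · exact ⟨0, ∅, fun hj => absurd ⟨j, hj, s, hmin, h⟩ hex⟩
      · exact ⟨d, T, fun _ => ⟨hT, hTl, fun a ha hlt =>
          hc a (Finset.mem_filter.2 ⟨ha, hlt s hs⟩)⟩⟩
    choose d T hT using hd'
    have hTB : Blocks p (2 * a₀) X T :=
      (hP.shrink (fun i hi => (hT i hi).1) (fun i hi => (hT i hi).2.1)).mono le_rfl
        fun y hy => (hYX y hy).1
    obtain ⟨c, -, hc⟩ := Finset.exists_le_card_fiber_of_mul_le_card_of_maps_to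
      (s := Finset.range (2 * a₀)) (t := (Finset.univ : Finset (Fin 2)))
      (f := d) (n := a₀) (by simp) Finset.univ_nonempty (by simp)
    obtain ⟨e, heJ, helt⟩ := exists_enum _ hc
    have heK : ∀ i < a₀, e i < 2 * a₀ := fun i hi =>
      Finset.mem_range.1 (Finset.mem_filter.1 (heJ i hi)).1
    have hed : ∀ i < a₀, d (e i) = c := fun i hi => (Finset.mem_filter.1 (heJ i hi)).2
    refine ⟨a₀, ha₀, c, fun i => T (e i), hTB.reindex heK helt, ?_, ?_⟩
    · intro i hi y hy
      have hlt : ∀ z ∈ P (e i), a₀ < z := fun z hz => (hYX z (hP.sub _ (heK i hi) hz)).2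
      refine ⟨hlt y ((hT _ (heK i hi)).1 hy), ?_⟩
      rw [(hT _ (heK i hi)).2.2 a₀ ha₀ hlt y hy, hed i hi]
    · intro i j hij hj y hy z hz
      have hi := hij.trans hj
      have hyP := (hT _ (heK i hi)).1 hy
      rw [(hT _ (heK j hj)).2.2 y (hYX y (hP.sub _ (heK i hi) hyP)).1
        (fun z' hz' => hP.lt _ _ (helt i j hij hj) (heK j hj) y hyP z' hz') z hz, hed j hj]

/-- Asymmetric version: `ω^(11 (g 0 + g 1))`-largeness yields, for some colour `c`, a homogeneous
`ω^(g c)`-large subset of colour `c`. -/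
theorem ramsey_asymmetric (f : ℕ → ℕ → Fin 2) : ∀ (s : ℕ) (g : Fin 2 → ℕ), g 0 + g 1 = s →
    ∀ X : Finset ℕ, (∀ y ∈ X, 1 ≤ y) → IsAlphaLarge [11 * s] X →
      ∃ c, ∃ H ⊆ X, IsAlphaLarge [g c] H ∧ ∀ a ∈ H, ∀ b ∈ H, a < b → f a b = c := by
  classical
  intro s
  induction s with
  | zero =>
    intro g hg X _ h
    obtain ⟨y, hy⟩ := h.nonempty
    refine ⟨0, {y}, by simpa using hy, ?_, by simp⟩
    rw [show g 0 = 0 by omega]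
    exact isAlphaLarge_singleton y
  | succ s ih =>
    intro g hg X hpos h
    obtain ⟨a, haX, t, T, hT, h1, h2⟩ := grouping f (p := 11 * s) hpos h
    by_cases hgt : g t = 0
    · refine ⟨t, {a}, by simpa using haX, ?_, by simp⟩
      rw [hgt]
      exact isAlphaLarge_singleton a
    have hg' : (Function.update g t (g t - 1)) 0 + (Function.update g t (g t - 1)) 1 = s := by
      fin_cases t <;> simp at hgt ⊢ <;> omega
    have hi : ∀ i, ∃ (c : Fin 2) (H : Finset ℕ), i < a → H ⊆ T i ∧
        IsAlphaLarge [Function.update g t (g t - 1) c] H ∧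
        ∀ a ∈ H, ∀ b ∈ H, a < b → f a b = c := by
      intro i
      by_cases hi : i < a
      · obtain ⟨c, H, hH⟩ := ih _ hg' (T i) (fun y hy => hpos y (hT.sub i hi hy)) (hT.large i hi)
        exact ⟨c, H, fun _ => hH⟩
      · exact ⟨0, ∅, fun h => absurd h hi⟩
    choose c H hH using hi
    by_cases hex : ∃ i < a, c i ≠ t
    · obtain ⟨i, hi, hct⟩ := hex
      obtain ⟨e1, e2, e3⟩ := hH i hi
      rw [Function.update_of_ne hct] at e2
      exact ⟨c i, H i, e1.trans (hT.sub i hi), e2, e3⟩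
    · -- every block contributes a set of colour `t`, the colour between the parts: take the union
      push Not at hex
      have hHl : ∀ i < a, IsAlphaLarge [g t - 1] (H i) := fun i hi => by
        have := (hH i hi).2.1
        rwa [hex i hi, Function.update_self] at this
      have hHB := hT.shrink (fun i hi => (hH i hi).1) hHl
      refine ⟨t, insert a ((Finset.range a).biUnion H), ?_, ?_, ?_⟩
      · intro y hy
        rcases Finset.mem_insert.1 hy with rfl | hy
        · exact haX
        · obtain ⟨i, hi, hy⟩ := Finset.mem_biUnion.1 hy
          exact hHB.sub i (Finset.mem_range.1 hi) hy
      · rw [show g t = (g t - 1) + 1 by omega]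
        refine isAlphaLarge_of_blocks (a := a) (B := H) (Finset.mem_insert_self _ _)
          ⟨fun i hi y hy => ?_, hHl, hHB.lt⟩ (fun i hi y hy => (h1 i hi y ((hH i hi).1 hy)).1)
        exact Finset.mem_insert_of_mem (Finset.mem_biUnion.2 ⟨i, Finset.mem_range.2 hi, hy⟩)
      · intro y hy z hz hyz
        rcases Finset.mem_insert.1 hz with rfl | hz
        · rcases Finset.mem_insert.1 hy with rfl | hy
          · exact absurd hyz (lt_irrefl _)
          · obtain ⟨i, hi, hy⟩ := Finset.mem_biUnion.1 hy
            have hi := Finset.mem_range.1 hi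
            exact absurd hyz (h1 i hi y ((hH i hi).1 hy)).1.not_gt
        · obtain ⟨j, hj, hzj⟩ := Finset.mem_biUnion.1 hz
          have hj := Finset.mem_range.1 hj
          rcases Finset.mem_insert.1 hy with rfl | hy
          · exact (h1 j hj z ((hH j hj).1 hzj)).2
          · obtain ⟨i, hi, hy⟩ := Finset.mem_biUnion.1 hy
            have hi := Finset.mem_range.1 hi
            rcases lt_trichotomy i j with hij | rfl | hij
            · exact h2 i j hij hj y ((hH i hi).1 hy) z ((hH j hj).1 hzj)
            · rw [← hex i hi]
              exact (hH i hi).2.2 y hy z hzj hyz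
            · exact absurd hyz (hHB.lt j i hij hi z hzj y hy).not_gt

/-! ### The bound for pairs -/

/-- **Effective finite Ramsey bound for pairs via α-largeness.** For every
`x : ℕ`, if `X ⊆ ℕ` is a finite `ω^{300·x}`-large set with `min X ≥ 1`, then
every colouring `f : [X]² → 2` has an `ω^x`-large homogeneous subset `H ⊆ X`.
(A colouring of pairs is given as a function `f : ℕ → ℕ → Fin 2` evaluated on
pairs `a < b`.) -/
theorem effective_finite_ramsey_pairs_alphaLarge (x : ℕ) (X : Finset ℕ)
    (hmin : ∀ y ∈ X, 1 ≤ y)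
    (hlarge : IsAlphaLarge [300 * x] X)
    (f : ℕ → ℕ → Fin 2) :
    ∃ H ⊆ X, IsAlphaLarge [x] H ∧
      ∃ c : Fin 2, ∀ a ∈ H, ∀ b ∈ H, a < b → f a b = c := by
  obtain ⟨c, H, hHX, hH, hc⟩ := ramsey_asymmetric f (x + x) (fun _ => x) rfl X hmin
    (hlarge.of_le (by omega) hmin)
  exact ⟨H, hHX, hH, c, hc⟩
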